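/- arXiv:0709.3021 — 2 statements merged into one kernel-verified Lean document; each statement's English description precedes it below -/
import Mathlib

section
/- Let n ≥ 1 and k ≥ 0. Then, as an identity in MvPolynomial (Fin n) ℤ: n! · Δ(X)^{2k} = ∑_{(σ_1,…,σ_{2k+2}) ∈ (S_n)^{2k+2}} sign(σ_1)⋯sign(σ_{2k+2}) · ∏_{i=1}^n h_{(n−σ_1(i)) + (n−σ_2(i)) + ⋯ + (n−σ_{2k+1}(i)) + σ_{2k+2}(i) − n}(X). That is, the 2k-th power of the Vandermonde determinant equals the hyperdeterminant of the (2k+2)-th order hypermatrix with entries h_{(n−i_1)+⋯+(n−i_{2k+1})+i_{2k+2}−n}(X), 1 ≤ i_1,…,i_{2k+2} ≤ n (the hyperdeterminantal content of the identity expressing Δ(X)^{2k} as a Jack polynomial P^{(k+1)}_{n^{(n−1)k}} of the alphabet −X). -/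
/-- `hh n p` is the `p`-th complete homogeneous symmetric polynomial in `n`
variables, with the convention `hh n p = 0` for `p < 0` and `hh n 0 = 1`. -/
noncomputable def hh (n : ℕ) (p : ℤ) : MvPolynomial (Fin n) ℤ :=
  if 0 ≤ p then MvPolynomial.hsymm (Fin n) ℤ p.toNat else 0

/-- The Vandermonde polynomial `Δ(X) = ∏_{i<j} (x_i − x_j)`. -/
noncomputable def vandermondePoly (n : ℕ) : MvPolynomial (Fin n) ℤ :=
  ∏ p ∈ Finset.univ.filter (fun p : Fin n × Fin n => p.1 < p.2),
    (MvPolynomial.X p.1 - MvPolynomial.X p.2)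

/-!
Two facts combine. First, Sylvester's formula: at distinct points `x_1, …, x_n` of a field,
`h_{p-(n-1)}(x) = ∑_j w_j x_j ^ p` with the Lagrange weights `w_j = ∏_{l ≠ j} (x_j - x_l)⁻¹`, for
every natural `p`; for `p < n - 1` both sides vanish. Multiplying the generating function of the
right-hand side by `1 - x_l t` removes the point `x_l`, so the formula follows by induction on the
number of points.

Second, a Cauchy–Binet expansion: a hypermatrix of even order with entries
`∑_j c_j ∏_s A_s (a_s, j)` has hyperdeterminant `n! ∏_j c_j ∏_s det A_s`, because permuting the
columns of all the `A_s` simultaneously produces an even power of a sign. When the exponent `p` is a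
sum of contributions of the individual indices, Sylvester's formula has this shape and each `A_s` is
a Vandermonde matrix. There are `2k + 2` Vandermonde determinants, and the product of the weights
cancels two of them.
-/

open Finset

section Hyperdeterminant

variable {κ ι R : Type*} [Fintype κ] [Fintype ι] [DecidableEq ι] [CommRing R]

theorem prod_det_submatrix_perm (hκ : Even (Fintype.card κ)) (A : κ → Matrix ι ι R)
    (τ : Equiv.Perm ι) : ∏ s, ((A s).submatrix id τ).det = ∏ s, (A s).det := by
  have hsign : ((Equiv.Perm.sign τ : ℤ) : R) ^ Fintype.card κ = 1 := by
    rcases Int.units_eq_one_or (Equiv.Perm.sign τ) with h | h <;> simp [h, hκ.neg_one_pow]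
  simp only [Matrix.det_permute', prod_mul_distrib, prod_const, card_univ, hsign, one_mul]

variable [DecidableEq κ]

/-- Cayley's first hyperdeterminant, without the usual factor `1 / n!`, of a hypermatrix whose
axes are indexed by `κ`, each of them with index set `ι`. -/
def hyperdet (M : (κ → ι) → R) : R :=
  ∑ σ : κ → Equiv.Perm ι, (∏ s, (Equiv.Perm.sign (σ s) : ℤ)) • ∏ i, M fun s => σ s i

theorem map_hyperdet {S : Type*} [CommRing S] (φ : R →+* S) (M : (κ → ι) → R) :
    φ (hyperdet M) = hyperdet fun a => φ (M a) := by
  simp only [hyperdet, map_sum, map_zsmul, map_prod]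

theorem hyperdet_sum_mul_prod {α : Type*} [Fintype α] (c : α → R) (A : κ → Matrix ι α R) :
    hyperdet (fun a : κ → ι => ∑ j, c j * ∏ s, A s (a s) j)
      = ∑ f : ι → α, (∏ i, c (f i)) * ∏ s, ((A s).submatrix id f).det := by
  calc hyperdet (fun a : κ → ι => ∑ j, c j * ∏ s, A s (a s) j)
    _ = ∑ σ : κ → Equiv.Perm ι, ∑ f : ι → α, (∏ i, c (f i)) *
          ∏ s, ((Equiv.Perm.sign (σ s) : ℤ) : R) * ∏ i, A s (σ s i) (f i) := by
      refine sum_congr rfl fun σ _ => ?_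
      rw [Fintype.prod_sum, smul_sum]
      refine sum_congr rfl fun f _ => ?_
      rw [zsmul_eq_mul, Int.cast_prod, prod_mul_distrib, prod_mul_distrib, prod_comm,
        mul_left_comm]
    _ = ∑ f : ι → α, (∏ i, c (f i)) * ∏ s, ((A s).submatrix id f).det := by
      rw [sum_comm]
      simp only [Matrix.det_apply', Fintype.prod_sum, mul_sum, Matrix.submatrix_apply, id]

theorem hyperdet_sum_mul_prod_of_even [Nonempty κ] (hκ : Even (Fintype.card κ)) (c : ι → R)
    (A : κ → Matrix ι ι R) :
    hyperdet (fun a : κ → ι => ∑ j, c j * ∏ s, A s (a s) j)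
      = (Fintype.card ι).factorial * ((∏ j, c j) * ∏ s, (A s).det) := by
  have eq_zero_of_notMem_range : ∀ f : ι → ι, f ∉ Set.range ((⇑) : Equiv.Perm ι → ι → ι) →
      (∏ i, c (f i)) * ∏ s, ((A s).submatrix id f).det = 0 := by
    intro f hf
    have hinj : ¬ Function.Injective f := fun h =>
      hf ⟨.ofBijective f (Finite.injective_iff_bijective.1 h), rfl⟩
    obtain ⟨i, j, hij, hne⟩ := Function.not_injective_iff.1 hinj
    obtain ⟨s⟩ := ‹Nonempty κ›
    rw [prod_eq_zero (mem_univ s) (Matrix.det_zero_of_column_eq hne fun l => by simp [hij]),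
      mul_zero]
  rw [hyperdet_sum_mul_prod, ← Fintype.sum_of_injective _ DFunLike.coe_injective
    (fun _ : Equiv.Perm ι => (∏ j, c j) * ∏ s, (A s).det) _ eq_zero_of_notMem_range fun τ => by
      rw [prod_det_submatrix_perm hκ, Equiv.prod_comp τ c],
    sum_const, card_univ, Fintype.card_perm, nsmul_eq_mul]

end Hyperdeterminant

section GeometricSeries

open PowerSeries

/-- The geometric series `∑ a ^ m X ^ m`, that is `1 / (1 - a X)`. Its products are the generating
functions of the complete homogeneous symmetric polynomials. -/
def geomSeries {R : Type*} [Semiring R] (a : R) : R⟦X⟧ := PowerSeries.mk (a ^ ·)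

theorem coeff_geomSeries {R : Type*} [Semiring R] (a : R) (m : ℕ) :
    coeff m (geomSeries a) = a ^ m :=
  coeff_mk _ _

theorem one_sub_C_mul_X_mul_geomSeries {R : Type*} [CommRing R] (a : R) :
    (1 - C a * X) * geomSeries a = 1 := by
  have h := congrArg (rescale a) (mk_one_mul_one_sub_eq_one R)
  simpa [geomSeries, rescale_mk, rescale_X, mul_comm] using h

theorem coeff_prod_geomSeries {σ R S : Type*} [Fintype σ] [DecidableEq σ] [CommSemiring R]
    [CommSemiring S] [Algebra R S] (x : σ → S) (d : ℕ) :
    coeff d (∏ i, geomSeries (x i)) = MvPolynomial.aeval x (MvPolynomial.hsymm σ R d) := by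
  rw [coeff_prod, MvPolynomial.hsymm, map_sum]
  symm
  refine sum_bij' (fun s _ => Multiset.toFinsupp s.1) (fun l hl => ⟨Finsupp.toMultiset l, ?_⟩)
    (fun s _ => ?_) (fun _ _ => mem_univ _) (fun s _ => Subtype.ext (by simp)) (fun l _ => by simp)
    fun s _ => ?_
  · rw [Finsupp.card_toMultiset, ← (mem_finsuppAntidiag.1 hl).1]
    exact Finsupp.sum_fintype _ _ fun _ => rfl
  · rw [mem_finsuppAntidiag]
    exact ⟨(Multiset.sum_count_eq_card fun _ _ => mem_univ _).trans s.2, subset_univ _⟩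
  · simp only [map_multiset_prod, Multiset.map_map, Function.comp_def, MvPolynomial.aeval_X,
      coeff_geomSeries, Multiset.toFinsupp_apply]
    rw [prod_multiset_map_count]
    refine prod_subset (subset_univ _) fun i _ hi => ?_
    rw [Multiset.count_eq_zero_of_notMem (mt Multiset.mem_toFinset.2 hi), pow_zero]

end GeometricSeries

section NodalWeight

open Lagrange

variable {ι K : Type*} [DecidableEq ι] [Field K] {s : Finset ι} {v : ι → K}

theorem sum_nodalWeight_eq_zero (hv : Set.InjOn v s) (hs : 1 < #s) :
    ∑ i ∈ s, nodalWeight s v i = 0 := by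
  have h := coeff_eq_sum hv (P := 1) (by rw [Polynomial.degree_one]; exact_mod_cast hs.le)
  rw [Polynomial.coeff_one, if_neg (by omega)] at h
  simpa [nodalWeight] using h.symm

theorem nodalWeight_cons_mul_sub {a i : ι} (ha : a ∉ s) (hi : i ∈ s) (hv : v i ≠ v a) :
    nodalWeight (s.cons a ha) v i * (v i - v a) = nodalWeight s v i := by
  have hia : a ≠ i := by rintro rfl; exact ha hi
  rw [nodalWeight, cons_eq_insert, erase_insert_of_ne hia,
    prod_insert fun h => ha (mem_of_mem_erase h), mul_right_comm,
    inv_mul_cancel₀ (sub_ne_zero.2 hv), one_mul, nodalWeight]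

open PowerSeries

theorem one_sub_C_mul_X_mul_sum_nodalWeight {a : ι} (ha : a ∉ s) (hs : s.Nonempty)
    (hv : Set.InjOn v (s.cons a ha)) :
    (1 - C (v a) * X) * ∑ i ∈ s.cons a ha, C (nodalWeight (s.cons a ha) v i) * geomSeries (v i)
      = X * ∑ i ∈ s, C (nodalWeight s v i) * geomSeries (v i) := by
  set w := nodalWeight (s.cons a ha) v with hw
  have hne : ∀ i ∈ s, v i ≠ v a := fun i hi h =>
    ha (hv (mem_cons_of_mem hi) (mem_cons_self a s) h ▸ hi)
  have sum_w : ∑ i ∈ s.cons a ha, w i = 0 :=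
    sum_nodalWeight_eq_zero hv (by rw [card_cons]; have := hs.card_pos; omega)
  calc (1 - C (v a) * X) * ∑ i ∈ s.cons a ha, C (w i) * geomSeries (v i)
    _ = ∑ i ∈ s.cons a ha, (C (w i) + X * (C (w i * (v i - v a)) * geomSeries (v i))) := by
      rw [mul_sum]
      refine sum_congr rfl fun i _ => ?_
      rw [map_mul, map_sub]
      linear_combination C (w i) * one_sub_C_mul_X_mul_geomSeries (v i)
    _ = X * ∑ i ∈ s, C (w i * (v i - v a)) * geomSeries (v i) := by
      rw [sum_add_distrib, ← map_sum, sum_w, map_zero, zero_add, ← mul_sum, sum_cons,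
        sub_self, mul_zero, map_zero, zero_mul, zero_add]
    _ = X * ∑ i ∈ s, C (nodalWeight s v i) * geomSeries (v i) := by
      congr 1
      refine sum_congr rfl fun i hi => ?_
      rw [hw, nodalWeight_cons_mul_sub ha hi (hne i hi)]

theorem sum_C_nodalWeight_mul_geomSeries (hs : s.Nonempty) (hv : Set.InjOn v s) :
    ∑ i ∈ s, C (nodalWeight s v i) * geomSeries (v i)
      = X ^ (#s - 1) * ∏ i ∈ s, geomSeries (v i) := by
  induction hs using Nonempty.cons_induction with
  | singleton a => simp [nodalWeight]
  | cons a s ha hs ih =>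
    have remove_node := one_sub_C_mul_X_mul_sum_nodalWeight ha hs hv
    have hcard : #s = #s - 1 + 1 := (Nat.succ_pred_eq_of_pos hs.card_pos).symm
    rw [ih (hv.mono (coe_subset.2 (subset_cons ha))), ← mul_assoc, ← pow_succ', ← hcard]
      at remove_node
    rw [prod_cons, card_cons, Nat.add_sub_cancel]
    linear_combination geomSeries (v a) * remove_node -
      (∑ i ∈ s.cons a ha, C (nodalWeight (s.cons a ha) v i) * geomSeries (v i)) *
        one_sub_C_mul_X_mul_geomSeries (v a)

end NodalWeight

section Vandermonde

open Lagrange MvPolynomial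

variable {n : ℕ}

theorem aeval_vandermondePoly {R : Type*} [CommRing R] (x : Fin n → R) :
    aeval x (vandermondePoly n) = ∏ i, ∏ j ∈ Ioi i, (x i - x j) := by
  simp only [vandermondePoly, map_prod, map_sub, aeval_X]
  exact prod_finset_product' (univ.filter fun p : Fin n × Fin n => p.1 < p.2) univ Ioi (by simp)
    (f := fun i j => x i - x j)

theorem det_pow_rev {R : Type*} [CommRing R] (x : Fin n → R) :
    (Matrix.of fun a j : Fin n => x j ^ (a.rev : ℕ)).det = aeval x (vandermondePoly n) := by
  have h := Matrix.det_projVandermonde 1 x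
  simp only [Pi.one_apply, one_mul] at h
  rw [aeval_vandermondePoly, ← Matrix.det_transpose, ← h]
  congr 1
  ext i j
  simp [Matrix.projVandermonde_apply]

variable {K : Type*} [Field K] {x : Fin n → K}

theorem prod_nodalWeight_mul_vandermondePoly_mul_det (hx : Function.Injective x) :
    (∏ j, nodalWeight univ x j) * (aeval x (vandermondePoly n) * (Matrix.vandermonde x).det)
      = 1 := by
  have prod_sub : aeval x (vandermondePoly n) * (Matrix.vandermonde x).det
      = ∏ i, ∏ j ∈ univ.erase i, (x i - x j) := by
    simp only [aeval_vandermondePoly, Matrix.det_vandermonde, ← prod_mul_distrib,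
      ← compl_singleton]
    exact prod_prod_Ioi_mul_eq_prod_prod_off_diag fun j i => x i - x j
  rw [prod_sub, ← prod_mul_distrib]
  refine prod_eq_one fun i _ => ?_
  rw [nodalWeight, prod_inv_distrib]
  exact inv_mul_cancel₀ <| prod_ne_zero_iff.2 fun j hj =>
    sub_ne_zero.2 fun hij => ne_of_mem_erase hj (hx hij).symm

theorem aeval_hh_sub (hn : 1 ≤ n) (hx : Function.Injective x) (p : ℕ) :
    aeval x (hh n (p - (n - 1))) = ∑ j, nodalWeight univ x j * x j ^ p := by
  have : Nonempty (Fin n) := ⟨⟨0, hn⟩⟩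
  have h := congrArg (PowerSeries.coeff p)
    (sum_C_nodalWeight_mul_geomSeries univ_nonempty hx.injOn)
  rw [map_sum, PowerSeries.coeff_X_pow_mul', card_univ, Fintype.card_fin,
    coeff_prod_geomSeries (R := ℤ)] at h
  simp only [PowerSeries.coeff_C_mul, coeff_geomSeries] at h
  rw [h, hh, apply_ite (aeval x), map_zero]
  have hle : (0 : ℤ) ≤ p - (n - 1) ↔ n - 1 ≤ p := by omega
  have htoNat : ((p : ℤ) - (n - 1)).toNat = p - (n - 1) := by omega
  simp only [hle, htoNat]

theorem hyperdet_aeval_hh {κ : Type*} [Fintype κ] [DecidableEq κ] [Nonempty κ]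
    (hκ : Even (Fintype.card κ)) (hn : 1 ≤ n) (hx : Function.Injective x)
    (e : κ → Fin n → ℕ) :
    hyperdet (fun a : κ → Fin n => aeval x (hh n ((∑ s, e s (a s) : ℕ) - (n - 1))))
      = n.factorial * ((∏ j, nodalWeight univ x j) *
          ∏ s, (Matrix.of fun a j => x j ^ e s a).det) := by
  simp only [aeval_hh_sub hn hx, ← prod_pow_eq_pow_sum]
  simpa using hyperdet_sum_mul_prod_of_even hκ (nodalWeight univ x)
    fun s => Matrix.of fun a j => x j ^ e s a

/-- The exponents `n - i_1, …, n - i_m, i_{m+1} - 1` that the indices of the hypermatrix of the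
theorem contribute to its entries, in terms of the indices `a = i - 1 : Fin n`. -/
def indexExponent (m : ℕ) : Fin (m + 1) → Fin n → ℕ :=
  Fin.snoc (fun _ a => a.rev) fun a => a

theorem sum_indexExponent (m : ℕ) (a : Fin (m + 1) → Fin n) :
    ((∑ s, indexExponent m s (a s) : ℕ) : ℤ) - (n - 1)
      = (∑ s ∈ univ.filter (fun s : Fin (m + 1) => (s : ℕ) < m), ((n : ℤ) - ((a s : ℕ) + 1)))
          + ((a (Fin.last m) : ℕ) + 1) - n := by
  have val_rev : ∀ b : Fin n, ((b.rev : ℕ) : ℤ) = n - ((b : ℕ) + 1) := fun b => by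
    rw [Fin.val_rev]
    omega
  rw [sum_filter, Fin.sum_univ_castSucc, Fin.sum_univ_castSucc]
  simp only [indexExponent, Fin.snoc_castSucc, Fin.snoc_last, Fin.val_castSucc, Fin.is_lt,
    Fin.val_last, lt_self_iff_false, if_true, if_false, Nat.cast_add, Nat.cast_sum, val_rev]
  ring

theorem prod_det_pow_indexExponent {R : Type*} [CommRing R] (m : ℕ) (x : Fin n → R) :
    ∏ s, (Matrix.of fun a j : Fin n => x j ^ indexExponent m s a).det
      = aeval x (vandermondePoly n) ^ m * (Matrix.vandermonde x).det := by
  rw [Fin.prod_univ_castSucc]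
  simp only [indexExponent, Fin.snoc_castSucc, Fin.snoc_last, det_pow_rev, prod_const, card_univ,
    Fintype.card_fin]
  rw [← Matrix.det_transpose (Matrix.vandermonde x)]
  rfl

theorem hyperdet_aeval_hh_indexExponent (k : ℕ) (hn : 1 ≤ n) (hx : Function.Injective x) :
    hyperdet (fun a : Fin (2 * k + 2) → Fin n =>
        aeval x (hh n ((∑ s, indexExponent (2 * k + 1) s (a s) : ℕ) - (n - 1))))
      = n.factorial * aeval x (vandermondePoly n) ^ (2 * k) := by
  rw [hyperdet_aeval_hh (by rw [Fintype.card_fin]; exact ⟨k + 1, by ring⟩) hn hx,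
    prod_det_pow_indexExponent]
  linear_combination (n.factorial * aeval x (vandermondePoly n) ^ (2 * k)) *
    prod_nodalWeight_mul_vandermondePoly_mul_det hx

end Vandermonde

/-- The `2k`-th power of the Vandermonde determinant is the
`(1/n!)`-scaled hyperdeterminant of the `(2k+2)`-th order hypermatrix with
entries `h_{(n−i_1)+⋯+(n−i_{2k+1})+i_{2k+2}−n}(X)` (the hyperdeterminantal
content of `Δ(X)^{2k}` being the Jack polynomial `P^{(k+1)}_{n^{(n−1)k}}(−X)`). -/
theorem vandermonde_pow_eq_hyperdet (n k : ℕ) (hn : 1 ≤ n) :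
    (Nat.factorial n : ℤ) • vandermondePoly n ^ (2 * k)
      = ∑ σ : Fin (2 * k + 2) → Equiv.Perm (Fin n),
          (∏ s, (Equiv.Perm.sign (σ s) : ℤ)) •
            ∏ i, hh n
              ((∑ s ∈ Finset.univ.filter (fun s : Fin (2 * k + 2) => (s : ℕ) < 2 * k + 1),
                  ((n : ℤ) - (((σ s i : ℕ) : ℤ) + 1)))
                + (((σ ⟨2 * k + 1, by omega⟩ i : ℕ) : ℤ) + 1) - (n : ℤ)) := by
  obtain ⟨K, _, φ, hφ⟩ : ∃ (K : Type) (_ : Field K) (φ : MvPolynomial (Fin n) ℤ →+* K),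
      Function.Injective φ :=
    ⟨_, inferInstance, _, IsFractionRing.injective _ (FractionRing (MvPolynomial (Fin n) ℤ))⟩
  let x i := φ (MvPolynomial.X i)
  have hx : Function.Injective x := hφ.comp MvPolynomial.X_injective
  have hφx : ∀ p, φ p = MvPolynomial.aeval x p := fun p =>
    DFunLike.congr_fun (MvPolynomial.aeval_unique φ.toIntAlgHom) p
  apply hφ
  calc φ ((n.factorial : ℤ) • vandermondePoly n ^ (2 * k))
    _ = n.factorial * MvPolynomial.aeval x (vandermondePoly n) ^ (2 * k) := by
      rw [map_zsmul, map_pow, hφx, zsmul_eq_mul, Int.cast_natCast]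
    _ = φ (hyperdet fun a : Fin (2 * k + 2) → Fin n =>
          hh n ((∑ s, indexExponent (2 * k + 1) s (a s) : ℕ) - (n - 1))) := by
      rw [map_hyperdet]
      simp only [hφx, hyperdet_aeval_hh_indexExponent k hn hx]
    _ = _ := by
      simp only [sum_indexExponent]
      rfl
end

section
/- Let n ≥ 1, k ≥ 0, and let λ = (λ_1 ≥ … ≥ λ_n ≥ 0) be a partition with at most n parts. Let c_λ ∈ ℤ be the coefficient of the monomial x_1^{λ_1+n−1} x_2^{λ_2+n−2} ⋯ x_n^{λ_n} in Δ(X)^{2k+1} (this c_λ is the coefficient of the Schur polynomial S_λ(X) in the Schur expansion of Δ(X)^{2k}). Then n! · c_λ = (−1)^{n(n−1)/2} · ∑_{(σ_1,…,σ_{2k+2}) ∈ (S_n)^{2k+2}} sign(σ_1)⋯sign(σ_{2k+2}) · ∏_{i=1}^n χ[ (σ_1(i)−1) + (σ_2(i)−1) + ⋯ + (σ_{2k+2}(i)−1) + λ_{n−σ_1(i)+1} = (2k+1)(n−1) ], where χ[P] = 1 if P holds and 0 otherwise. That is, ⟨S_λ(X), Δ(X)^{2k}⟩ = (−1)^{n(n−1)/2}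 H^{k+1}_{reverse_n(λ)−((2k+1)(n−1))^n}(A_0), where A_0 is the alphabet with Λ^m(A_0) = δ_{m,0}. -/
/-!
Written as the determinant of the powers `xᵢ ^ (n - j)`, `Δ` has powers whose coefficients are
signed counts: the coefficient of `x ^ d` in `Δ ^ m` is the sum of `sign(σ₁)⋯sign(σₘ)` over the
families with `∑ₛ (n - σₛ(i)) = dᵢ` for all `i`. On the other side, in a hyperdeterminant of even
order `m + 1` one permutation may be fixed to be the identity, at the cost of a factor `n!`, which
leaves the same kind of sum with the exponents `d` read backwards. Reversing the variables
multiplies `Δ ^ m` by the sign of the reversal, `(-1) ^ (n * (n - 1) / 2)`, as `m` is odd.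
-/

/-- The signed sum `∑ sign(σ₁)⋯sign(σₘ) ∏ᵢ F(i; σ₁(i), …, σₘ(i))` over families of permutations
indexed by `ι`. For `F i j = M j` it is `|α|!` times Cayley's hyperdeterminant of the array `M`;
letting `F` depend on `i` accounts for one more permutation, fixed to be the identity. -/
def signedPermSum {ι α R : Type*} [Fintype ι] [DecidableEq ι] [Fintype α] [DecidableEq α]
    [CommRing R] (F : α → (ι → α) → R) : R :=
  ∑ σ : ι → Equiv.Perm α, (∏ s, Equiv.Perm.sign (σ s)) • ∏ i, F i fun s => σ s i

section SignedPermSum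

open Equiv.Perm

variable {ι α R : Type*} [Fintype ι] [DecidableEq ι] [Fintype α] [DecidableEq α] [CommRing R]

lemma signedPermSum_comp_perm (F : α → (ι → α) → R) (τ : Equiv.Perm α) :
    signedPermSum (fun i => F (τ i)) = sign τ ^ Fintype.card ι • signedPermSum F := by
  rw [signedPermSum, signedPermSum, Finset.smul_sum]
  refine Fintype.sum_equiv (Equiv.arrowCongr (Equiv.refl ι) (Equiv.mulRight τ⁻¹)) _ _ fun σ => ?_
  have hsign : ∏ s, sign (σ s) = sign τ ^ Fintype.card ι * ∏ s, sign (σ s * τ⁻¹) := by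
    rw [Finset.prod_congr rfl fun s _ => sign_mul (σ s) τ⁻¹, Finset.prod_mul_distrib,
      Finset.prod_const, Finset.card_univ, sign_inv, mul_left_comm, ← mul_pow, Int.units_mul_self,
      one_pow, mul_one]
  rw [hsign, mul_smul]
  congr 2
  exact Fintype.prod_equiv τ _ _ fun i => by simp

/-- Right translation by the inverse of the first permutation makes that permutation the identity;
for `m` odd this does not change the product of the signs. -/
lemma signedPermSum_eq_factorial_mul {m : ℕ} (hm : Odd m) (M : (Fin (m + 1) → α) → R) :
    signedPermSum (fun _ => M) =
      (Fintype.card α).factorial * signedPermSum (fun i j => M (Fin.cons i j)) := by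
  have hodd (τ : Equiv.Perm α) : sign τ * sign τ ^ m = 1 := by
    rw [← pow_succ', Int.units_pow_eq_pow_mod_two, Nat.even_iff.mp hm.add_one, pow_zero]
  calc signedPermSum (fun _ => M)
      = ∑ τ : Equiv.Perm α, sign τ • signedPermSum (fun i j => M (Fin.cons (τ i) j)) := by
        simp only [signedPermSum, Finset.smul_sum, ← Fintype.sum_prod_type']
        refine (Fintype.sum_equiv (Fin.consEquiv fun _ => Equiv.Perm α) _ _ fun p => ?_).symm
        have hcons (i : α) : (fun s => Fin.consEquiv (fun _ => Equiv.Perm α) p s i) =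
            Fin.cons (p.1 i) fun s => p.2 s i := by
          ext s; cases s using Fin.cases <;> rfl
        simp only [hcons, Fin.prod_univ_succ, smul_smul]
        rfl
    _ = ∑ _τ : Equiv.Perm α, signedPermSum (fun i j => M (Fin.cons i j)) := by
        refine Finset.sum_congr rfl fun τ _ => ?_
        rw [signedPermSum_comp_perm (fun i j => M (Fin.cons i j)) τ, Fintype.card_fin, smul_smul,
          hodd, one_smul]
    _ = _ := by
        rw [Finset.sum_const, Finset.card_univ, Fintype.card_perm, nsmul_eq_mul]

lemma det_pow_eq_signedPermSum (A : Matrix α α R) (m : ℕ) :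
    A.det ^ m = signedPermSum fun i (j : Fin m → α) => ∏ s, A i (j s) := by
  rw [← A.det_transpose, Matrix.det_apply, Fintype.sum_pow, signedPermSum]
  refine Finset.sum_congr rfl fun σ _ => ?_
  rw [Finset.prod_comm, Finset.prod_smul]
  rfl

end SignedPermSum

section FinRev

lemma val_rev_add_val {n : ℕ} (i : Fin n) : (i.rev : ℕ) + i = n - 1 := by
  grind

lemma mk_sub_val_eq_rev {n : ℕ} (i : Fin n) (h : n - 1 - (i : ℕ) < n) :
    (⟨n - 1 - i, h⟩ : Fin n) = i.rev := by
  grind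

lemma sub_val_rev {n : ℕ} (i : Fin n) : n - 1 - (i.rev : ℕ) = i := by
  grind

lemma sum_val_rev_add_sum_val {ι : Type*} [Fintype ι] {n : ℕ} (j : ι → Fin n) :
    ∑ s, ((j s).rev : ℕ) + ∑ s, (j s : ℕ) = Fintype.card ι * (n - 1) := by
  simp_rw [← Finset.sum_add_distrib, val_rev_add_val]
  simp

lemma sum_cons_add_eq_iff_sum_rev_eq {n m : ℕ} (c : ℕ) (i : Fin n) (j : Fin m → Fin n) :
    ∑ s, ((Fin.cons i j : Fin (m + 1) → Fin n) s : ℕ) + c = m * (n - 1) + i ↔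
      ∑ s, ((j s).rev : ℕ) = c := by
  have hsum := sum_val_rev_add_sum_val j
  rw [Fintype.card_fin] at hsum
  rw [Fin.sum_univ_succ]
  simp only [Fin.cons_zero, Fin.cons_succ]
  omega

lemma sign_revPerm (n : ℕ) :
    Equiv.Perm.sign (Fin.revPerm : Equiv.Perm (Fin n)) = (-1) ^ (n * (n - 1) / 2) := by
  have hrev (i : Fin n) : ∏ j ∈ Finset.Ioi i, (if i.rev < j.rev then (1 : ℤˣ) else -1) =
      (-1) ^ (n - 1 - (i : ℕ)) := by
    rw [Finset.prod_congr rfl fun j hj => if_neg (by simpa using (Finset.mem_Ioi.mp hj).le),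
      Finset.prod_const, Fin.card_Ioi]
  simp only [Equiv.Perm.sign_eq_prod_prod_Ioi, Fin.revPerm_apply, hrev]
  rw [Finset.prod_pow_eq_pow_sum, Fin.sum_univ_eq_sum_range (fun i => n - 1 - i),
    Finset.sum_range_reflect (fun i => i), Finset.sum_range_id]

end FinRev

section Vandermonde

open MvPolynomial

lemma vandermondePoly_eq_det_projVandermonde (n : ℕ) :
    vandermondePoly n = (Matrix.projVandermonde 1 (X : Fin n → MvPolynomial (Fin n) ℤ)).det := by
  rw [Matrix.det_projVandermonde, Finset.prod_sigma', vandermondePoly]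
  exact Finset.prod_bij' (fun p _ => ⟨p.1, p.2⟩) (fun p _ => (p.1, p.2))
    (by simp) (by simp) (by simp) (by simp) (by simp)

lemma coeff_vandermondePoly_pow {n : ℕ} (m : ℕ) (d : Fin n → ℕ) :
    coeff (Finsupp.equivFunOnFinite.symm d) (vandermondePoly n ^ m) =
      signedPermSum fun i (j : Fin m → Fin n) =>
        if ∑ s, ((j s).rev : ℕ) = d i then (1 : ℤ) else 0 := by
  rw [vandermondePoly_eq_det_projVandermonde, det_pow_eq_signedPermSum,
    signedPermSum, signedPermSum, coeff_sum]
  refine Finset.sum_congr rfl fun σ _ => ?_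
  simp only [Matrix.projVandermonde_apply, Pi.one_apply, one_pow, one_mul,
    Finset.prod_pow_eq_pow_sum]
  rw [Units.smul_def, Units.smul_def, coeff_smul, coeff_prod_X_pow, Fintype.prod_ite_zero]
  simp [Finsupp.ext_iff, eq_comm]

lemma coeff_comp_perm_vandermondePoly_pow {n : ℕ} (m : ℕ) (d : Fin n → ℕ)
    (τ : Equiv.Perm (Fin n)) :
    coeff (Finsupp.equivFunOnFinite.symm (d ∘ τ)) (vandermondePoly n ^ m) =
      (Equiv.Perm.sign τ : ℤ) ^ m *
        coeff (Finsupp.equivFunOnFinite.symm d) (vandermondePoly n ^ m) := by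
  rw [coeff_vandermondePoly_pow, coeff_vandermondePoly_pow, ← Units.val_pow_eq_pow_val,
    ← smul_eq_mul, ← Units.smul_def]
  simpa only [Fintype.card_fin, Function.comp_apply] using signedPermSum_comp_perm
    (fun i (j : Fin m → Fin n) => if ∑ s, ((j s).rev : ℕ) = d i then (1 : ℤ) else 0) τ

/-- For `d = λ + δ` the `j 0` on the right cancels the part `δ` of `d (j 0).rev`. -/
theorem schur_coeff_vandermonde_pow_eq_hyperdet_general
    (n : ℕ) {m : ℕ} (hm : Odd m) (d : Fin n → ℕ) :
    (n.factorial : ℤ) * coeff (Finsupp.equivFunOnFinite.symm d) (vandermondePoly n ^ m) =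
      (-1) ^ (n * (n - 1) / 2) *
        signedPermSum fun _ (j : Fin (m + 1) → Fin n) =>
          if ∑ s, (j s : ℕ) + d (j 0).rev = m * (n - 1) + j 0 then 1 else 0 := by
  have hsign : ((Equiv.Perm.sign (Fin.revPerm : Equiv.Perm (Fin n)) : ℤ)) ^ m =
      (-1) ^ (n * (n - 1) / 2) := by
    rw [sign_revPerm, Units.val_pow_eq_pow_val, Units.val_neg, Units.val_one, pow_right_comm,
      hm.neg_one_pow]
  calc (n.factorial : ℤ) * coeff (Finsupp.equivFunOnFinite.symm d) (vandermondePoly n ^ m)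
      = (-1) ^ (n * (n - 1) / 2) * (n.factorial *
          coeff (Finsupp.equivFunOnFinite.symm (d ∘ Fin.revPerm)) (vandermondePoly n ^ m)) := by
        rw [coeff_comp_perm_vandermondePoly_pow, hsign, mul_left_comm, ← mul_assoc _ _ (coeff _ _),
          ← mul_pow, neg_one_mul, neg_neg, one_pow, one_mul]
    _ = _ := by
        rw [signedPermSum_eq_factorial_mul hm, coeff_vandermondePoly_pow, Fintype.card_fin]
        simp only [Fin.cons_zero, sum_cons_add_eq_iff_sum_rev_eq, Function.comp_apply,
          Fin.revPerm_apply]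

end Vandermonde

/-- The coefficient `c_λ` of the Schur polynomial `S_λ(X)` in the Schur
expansion of `Δ(X)^{2k}`, i.e. the coefficient of the dominant monomial
`x^{λ+δ}` in `Δ(X)^{2k+1}`, equals (up to the factor `n!` and a sign) the
Hankel hyperdeterminant `H^{k+1}_{reverseₙ(λ)−((2k+1)(n−1))^n}(A₀)` of the
alphabet `A₀` with `Λ^m(A₀) = δ_{m,0}`. -/
theorem schur_coeff_vandermonde_pow_eq_hyperdet
    (n k : ℕ) (hn : 1 ≤ n)
    (lam : Fin n → ℕ) (hlam : Antitone lam) :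
    (Nat.factorial n : ℤ) *
        MvPolynomial.coeff
          (Finsupp.equivFunOnFinite.symm fun i : Fin n => lam i + (n - 1 - (i : ℕ)))
          (vandermondePoly n ^ (2 * k + 1))
      = (-1 : ℤ) ^ (n * (n - 1) / 2) *
          ∑ σ : Fin (2 * k + 2) → Equiv.Perm (Fin n),
            (∏ s, (Equiv.Perm.sign (σ s) : ℤ)) *
              ∏ i, (if (∑ s, (σ s i : ℕ))
                        + lam ⟨n - 1 - (σ ⟨0, by omega⟩ i : ℕ), by omega⟩
                      = (2 * k + 1) * (n - 1)
                    then (1 : ℤ) else 0) := by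
  simpa only [signedPermSum, Units.smul_def, Units.coe_prod, smul_eq_mul, mk_sub_val_eq_rev,
    sub_val_rev, ← add_assoc, add_left_inj, Fin.zero_eta] using
    schur_coeff_vandermonde_pow_eq_hyperdet_general n ⟨k, rfl⟩ fun i => lam i + (n - 1 - (i : ℕ))
end
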